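/- arXiv:1703.09808 — 4 statements merged into one kernel-verified Lean document; each statement's English description precedes it below -/
import Mathlib

section
/- Let d ≥ 2 and let h be a Hermitian d²×d² complex matrix with tr(h) = 0. There exists a pulse sequence decoupling h — i.e. a finite family of unitary d×d matrices u_1,…,u_k and reals α_1,…,α_k ≥ 0 with Σ_i α_i = 1 such that Σ_i α_i (u_i ⊗ u_i)† h (u_i ⊗ u_i) = 0 — if and only if tr(h Π_d) = 0, where Π_d is the swap operator. -/
open Matrix Kronecker
open scoped BigOperators

/-- The swap operator `Π_d` on `ℂ^d ⊗ ℂ^d`. -/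
def swapOp (d : ℕ) : Matrix (Fin d × Fin d) (Fin d × Fin d) ℂ :=
  fun p q => if p.1 = q.2 ∧ p.2 = q.1 then 1 else 0

/-!
The effective interactions of `h` form the convex hull of its orbit under conjugation by `u ⊗ u`,
and `tr x` and `tr (x Π)` are constant on this hull, which gives necessity.

Conversely, averaging over diagonal matrices of cube roots of unity yields a point `x` of the hull
with `x p q = 0` unless `p` and `q` are the same unordered pair. Let `D` be the projection onto the
span of the vectors `e_i ⊗ e_i`. If all entries of a unitary `w` have modulus `d^(-1/2)`, then every
diagonal entry of `(w ⊗ w) x (w ⊗ w)†` at some `e_i ⊗ e_i` is `d⁻²` times the sum of all entries of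
`x`, so `d * tr (((w ⊗ w) x (w ⊗ w)†) D) = tr x + tr (x Π) - tr (x D) = -tr (x D)`. Mixing `x` and
`(w ⊗ w) x (w ⊗ w)†` with weights `1 / (d + 1)` and `d / (d + 1)` therefore kills `tr (· D)`.
After averaging over phases and permutations, the entries at `(ii, ii)`, `(ij, ij)` and `(ij, ji)`
with `i ≠ j` depend only on their type, all others vanish, and the three traces force them to be 0.
-/

open ComplexConjugate

section Convexity

variable {G V W : Type*} [AddCommGroup V] [Module ℝ V] [AddCommGroup W] [Module ℝ W]

lemma linearMap_eq_of_mem_convexHull (f : V →ₗ[ℝ] W) {s : Set V} {c : W} (hs : ∀ v ∈ s, f v = c)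
    {x : V} (hx : x ∈ convexHull ℝ s) : f x = c :=
  convexHull_min hs ((convex_singleton c).linear_preimage f) hx

lemma exists_invariant_mem_convexHull_orbit [Group G] [Finite G] (ρ : Representation ℝ G V)
    (v : V) : ∃ x ∈ convexHull ℝ (Set.range fun g => ρ g v), ∀ g, ρ g x = x := by
  have := Fintype.ofFinite G
  have hcard : (Fintype.card G : ℝ) ≠ 0 := Nat.cast_ne_zero.2 Fintype.card_ne_zero
  let := invertibleOfNonzero hcard
  refine ⟨ρ.averageMap v, ?_, ρ.averageMap_invariant v⟩
  have havg : ρ.averageMap v = ∑ g, (Fintype.card G : ℝ)⁻¹ • ρ g v := by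
    simp [GroupAlgebra.average, Finset.smul_sum]
  rw [havg]
  exact (convex_convexHull ℝ _).sum_mem (fun _ _ => by positivity)
    (by simp [hcard]) fun g _ => subset_convexHull ℝ _ ⟨g, rfl⟩

end Convexity

lemma sym2_eq_of_forall_mul_eq {n G : Type*} [CommGroup G] {ζ : G} (hζ : ζ ≠ 1)
    (hζζ : ζ * ζ ≠ 1) {i j k l : n} (h : ∀ θ : n → G, θ i * θ j = θ k * θ l) :
    s(i, j) = s(k, l) := by
  classical
  have hsingle {a b : n} (hab : ∀ θ : n → G, θ a = θ b) : a = b := by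
    by_contra hne
    exact hζ (by simpa [Pi.mulSingle_apply, Ne.symm hne] using hab (Pi.mulSingle a ζ))
  by_cases hik : i = k
  · subst hik
    rw [hsingle fun θ => mul_left_cancel (h θ)]
  by_cases hil : i = l
  · subst hil
    rw [hsingle fun θ => mul_left_cancel ((h θ).trans (mul_comm _ _)), Sym2.eq_swap]
  have hone : ζ * (Pi.mulSingle i ζ : n → G) j = 1 := by
    simpa [Pi.mulSingle_apply, Ne.symm hik, Ne.symm hil] using h (Pi.mulSingle i ζ)
  rcases eq_or_ne j i with rfl | hji
  · simp [hζζ] at hone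
  · simp [hji, hζ] at hone

lemma eq_zero_of_perm_invariant_of_sum_eq_zero {n M : Type*} [Fintype n] [AddCommGroup M]
    [IsAddTorsionFree M] {f : n × n → M} (hf : ∀ (σ : Equiv.Perm n) i j, f (σ i, σ j) = f (i, j))
    (hsum : ∑ p, f p = 0) (hdiag : ∑ i, f (i, i) = 0) : f = 0 := by
  classical
  have hoff : ∑ p ∈ Finset.univ.offDiag, f p = 0 := by
    rw [← Finset.univ_product_univ, ← Finset.diag_union_offDiag,
      Finset.sum_union (Finset.disjoint_diag_offDiag _), Finset.sum_diag, hdiag, zero_add] at hsum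
    exact hsum
  ext ⟨i, j⟩
  by_cases hij : i = j
  · subst hij
    have hconst (a : n) : f (a, a) = f (i, i) := by
      simpa using hf (Equiv.swap i a) i i
    have : Nonempty n := ⟨i⟩
    simpa [hconst] using hdiag
  · have hconst : ∀ p ∈ Finset.univ.offDiag, f p = f (i, j) := by
      rintro ⟨a, b⟩ hab
      have htwo := Equiv.Perm.isMultiplyPretransitive n 2
      obtain ⟨σ, rfl, rfl⟩ := MulAction.is_two_pretransitive_iff.1 htwo hij
        (Finset.mem_offDiag.1 hab).2.2
      exact hf σ i j
    have hmem : (i, j) ∈ Finset.univ.offDiag := by simp [hij]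
    rw [Finset.sum_eq_card_nsmul hconst] at hoff
    exact (nsmul_eq_zero_iff_right (Finset.card_ne_zero_of_mem hmem)).1 hoff

lemma kronecker_permMatrix {R m n : Type*} [MulZeroOneClass R] [DecidableEq m] [DecidableEq n]
    (σ : Equiv.Perm m) (τ : Equiv.Perm n) :
    σ.permMatrix R ⊗ₖ τ.permMatrix R =
      Equiv.Perm.permMatrix R (Equiv.prodCongr σ τ : Equiv.Perm (m × n)) := by
  ext p q
  simp [PEquiv.toMatrix_apply, Prod.ext_iff, ← ite_and, and_comm]

/-- The swap operator on `ℂⁿ ⊗ ℂⁿ`, for an arbitrary index type `n`. -/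
def swapMatrix (n : Type*) [DecidableEq n] : Matrix (n × n) (n × n) ℂ :=
  Equiv.Perm.permMatrix ℂ (Equiv.prodComm n n)

/-- The projection of `ℂⁿ ⊗ ℂⁿ` onto the span of the vectors `e_i ⊗ e_i`. -/
def coincidenceProj (n : Type*) [DecidableEq n] : Matrix (n × n) (n × n) ℂ :=
  diagonal fun p => if p.1 = p.2 then 1 else 0

/-- Matrices whose `(p, q)` entry vanishes unless `p` and `q` have the same unordered pair of
components: they map each `span {e_i ⊗ e_j, e_j ⊗ e_i}` to itself. -/
def IsPairPreserving {n : Type*} (x : Matrix (n × n) (n × n) ℂ) : Prop :=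
  ∀ p q, s(p.1, p.2) ≠ s(q.1, q.2) → x p q = 0

lemma IsPairPreserving.apply_eq {n : Type*} [DecidableEq n] {x : Matrix (n × n) (n × n) ℂ}
    (hx : IsPairPreserving x) (p q : n × n) :
    x p q = (if p = q then x p p else 0) + (if p.swap = q then x p p.swap else 0) -
      if p.1 = p.2 ∧ p = q then x p p else 0 := by
  obtain ⟨i, j⟩ := p
  obtain ⟨k, l⟩ := q
  have h := hx (i, j) (k, l)
  simp only [ne_eq, Sym2.eq_iff, Prod.swap_prod_mk, Prod.mk.injEq] at h ⊢
  grind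

section EffectiveInteractions

variable {n : Type*} [Fintype n] [DecidableEq n]

/-- The action `u ↦ u ⊗ u` of the unitary group on `ℂⁿ ⊗ ℂⁿ`. -/
def tensorSquare : unitaryGroup n ℂ →* unitaryGroup (n × n) ℂ where
  toFun u := ⟨u.1 ⊗ₖ u.1, kronecker_mem_unitary u.2 u.2⟩
  map_one' := Subtype.ext one_kronecker_one
  map_mul' u v := Subtype.ext (mul_kronecker_mul u.1 v.1 u.1 v.1)

/-- The representation `x ↦ (u ⊗ u) x (u ⊗ u)†` of the unitary group. The scalars are real because
only convex combinations matter. -/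
noncomputable def tensorConj :
    Representation ℝ (unitaryGroup n ℂ) (Matrix (n × n) (n × n) ℂ) where
  toFun u := LinearMap.mulLeftRight ℝ ((tensorSquare u).1, (tensorSquare u).1ᴴ)
  map_one' := by ext1; simp
  map_mul' u v := by
    ext1 x
    simp [conjTranspose_mul, Matrix.mul_assoc]

lemma tensorConj_apply (u : unitaryGroup n ℂ) (x : Matrix (n × n) (n × n) ℂ) :
    tensorConj u x = (u.1 ⊗ₖ u.1) * x * (u.1 ⊗ₖ u.1)ᴴ :=
  rfl

lemma tensorConj_inv_apply (u : unitaryGroup n ℂ) (x : Matrix (n × n) (n × n) ℂ) :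
    tensorConj u⁻¹ x = (u.1 ⊗ₖ u.1)ᴴ * x * (u.1 ⊗ₖ u.1) := by
  have hinv : (u⁻¹).1 = u.1ᴴ := rfl
  rw [tensorConj_apply, hinv, conjTranspose_kronecker, conjTranspose_conjTranspose,
    conjTranspose_kronecker]

lemma trace_tensorConj_mul {u : unitaryGroup n ℂ} {a : Matrix (n × n) (n × n) ℂ}
    (hua : Commute (u.1 ⊗ₖ u.1) a) (x : Matrix (n × n) (n × n) ℂ) :
    (tensorConj u x * a).trace = (x * a).trace := by
  have hunitary : (u.1 ⊗ₖ u.1)ᴴ * (u.1 ⊗ₖ u.1) = 1 :=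
    mem_unitaryGroup_iff'.1 (tensorSquare u).2
  calc ((u.1 ⊗ₖ u.1) * x * (u.1 ⊗ₖ u.1)ᴴ * a).trace
      = (x * ((u.1 ⊗ₖ u.1)ᴴ * (a * (u.1 ⊗ₖ u.1)))).trace := by
        rw [Matrix.mul_assoc, Matrix.mul_assoc, trace_mul_comm]
        simp only [Matrix.mul_assoc]
    _ = (x * a).trace := by
        rw [← hua.eq, ← Matrix.mul_assoc _ᴴ, hunitary, Matrix.one_mul]

lemma trace_mul_eq_of_mem_convexHull {ι : Type*} {φ : ι → unitaryGroup n ℂ}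
    {a h x : Matrix (n × n) (n × n) ℂ}
    (hφ : ∀ i, Commute ((φ i).1 ⊗ₖ (φ i).1) a)
    (hx : x ∈ convexHull ℝ (Set.range fun i => tensorConj (φ i) h)) :
    (x * a).trace = (h * a).trace :=
  linearMap_eq_of_mem_convexHull (traceLinearMap (n × n) ℝ ℂ ∘ₗ LinearMap.mulRight ℝ a)
    (Set.forall_mem_range.2 fun i => trace_tensorConj_mul (hφ i) h) hx

/-- The leading-order effective interactions of the pulse sequences for `h`, as the convex hull of
the orbit of `h`. -/
def effectiveInteractions (h : Matrix (n × n) (n × n) ℂ) : Set (Matrix (n × n) (n × n) ℂ) :=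
  convexHull ℝ (Set.range fun u => tensorConj u h)

lemma tensorConj_mem_effectiveInteractions (u : unitaryGroup n ℂ)
    (h : Matrix (n × n) (n × n) ℂ) : tensorConj u h ∈ effectiveInteractions h :=
  subset_convexHull ℝ _ ⟨u, rfl⟩

lemma mem_effectiveInteractions_of_mem_convexHull {ι : Type*} {φ : ι → unitaryGroup n ℂ}
    {h x : Matrix (n × n) (n × n) ℂ}
    (hx : x ∈ convexHull ℝ (Set.range fun i => tensorConj (φ i) h)) :
    x ∈ effectiveInteractions h :=
  convexHull_mono (Set.range_comp_subset_range φ fun u => tensorConj u h) hx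

lemma effectiveInteractions_subset {h x : Matrix (n × n) (n × n) ℂ}
    (hx : x ∈ effectiveInteractions h) : effectiveInteractions x ⊆ effectiveInteractions h := by
  refine convexHull_min (Set.range_subset_iff.2 fun u => ?_) (convex_convexHull ℝ _)
  suffices effectiveInteractions h ⊆ tensorConj u ⁻¹' effectiveInteractions h from this hx
  refine convexHull_min (Set.range_subset_iff.2 fun v => ?_)
    ((convex_convexHull ℝ _).linear_preimage _)
  rw [Set.mem_preimage, ← Module.End.mul_apply, ← map_mul]
  exact tensorConj_mem_effectiveInteractions (u * v) h

lemma mem_effectiveInteractions_iff {h x : Matrix (n × n) (n × n) ℂ} :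
    x ∈ effectiveInteractions h ↔
      ∃ (k : ℕ) (u : Fin k → Matrix n n ℂ) (α : Fin k → ℝ),
        (∀ i, u i ∈ unitaryGroup n ℂ) ∧ (∀ i, 0 ≤ α i) ∧ (∑ i, α i = 1) ∧
        ∑ i, (α i : ℂ) • ((u i ⊗ₖ u i)ᴴ * h * (u i ⊗ₖ u i)) = x := by
  constructor
  · intro hx
    obtain ⟨ι, _, w, z, hw0, hw1, hz, rfl⟩ := mem_convexHull_iff_exists_fintype.1 hx
    choose u hu using hz
    let e := (Fintype.equivFin ι).symm
    refine ⟨Fintype.card ι, fun i => ((u (e i))⁻¹ : unitaryGroup n ℂ), w ∘ e,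
      fun i => (u (e i))⁻¹.2, fun i => hw0 (e i), (e.sum_comp w).trans hw1, ?_⟩
    rw [← e.sum_comp]
    simp only [← tensorConj_inv_apply, inv_inv, Function.comp_apply, Complex.coe_smul, hu]
  · rintro ⟨k, u, α, hu, hα0, hα1, rfl⟩
    refine (convex_convexHull ℝ _).sum_mem (fun i _ => hα0 i) hα1 fun i _ => ?_
    rw [← tensorConj_inv_apply ⟨u i, hu i⟩]
    exact tensorConj_mem_effectiveInteractions _ h

lemma trace_mul_swapMatrix (x : Matrix (n × n) (n × n) ℂ) :
    (x * swapMatrix n).trace = ∑ p, x p p.swap := by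
  rw [swapMatrix, PEquiv.mul_toMatrix_toPEquiv]
  rfl

lemma commute_kronecker_self_swapMatrix (u : Matrix n n ℂ) :
    Commute (u ⊗ₖ u) (swapMatrix n) := by
  rw [commute_iff_eq, swapMatrix, PEquiv.mul_toMatrix_toPEquiv, PEquiv.toMatrix_toPEquiv_mul]
  ext p q
  simp [mul_comm]

lemma trace_mul_coincidenceProj (x : Matrix (n × n) (n × n) ℂ) :
    (x * coincidenceProj n).trace = ∑ i, x (i, i) (i, i) := by
  simp [coincidenceProj, Matrix.trace, Fintype.sum_prod_type]

lemma trace_eq_of_mem_effectiveInteractions {h x : Matrix (n × n) (n × n) ℂ}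
    (hx : x ∈ effectiveInteractions h) : x.trace = h.trace := by
  simpa using trace_mul_eq_of_mem_convexHull (fun u => Commute.one_right (u.1 ⊗ₖ u.1)) hx

lemma trace_mul_swapMatrix_eq_of_mem_effectiveInteractions {h x : Matrix (n × n) (n × n) ℂ}
    (hx : x ∈ effectiveInteractions h) : (x * swapMatrix n).trace = (h * swapMatrix n).trace :=
  trace_mul_eq_of_mem_convexHull (φ := fun u => u)
    (fun u => commute_kronecker_self_swapMatrix u.1) hx

/-- Diagonal unitaries with `k`-th roots of unity on the diagonal; they form a finite group. -/
def phaseUnitary {k : ℕ} [NeZero k] : (n → rootsOfUnity k ℂ) →* unitaryGroup n ℂ where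
  toFun θ := ⟨diagonal fun i => ((θ i).1 : ℂ), by
    rw [mem_unitaryGroup_iff, star_eq_conjTranspose, diagonal_conjTranspose,
      diagonal_mul_diagonal, diagonal_eq_one]
    ext i
    simp [RCLike.mul_conj, Complex.norm_eq_one_of_mem_rootsOfUnity (θ i).2]⟩
  map_one' := Subtype.ext (by simp)
  map_mul' θ η := Subtype.ext (by simp)

lemma coe_phaseUnitary {k : ℕ} [NeZero k] (θ : n → rootsOfUnity k ℂ) :
    (phaseUnitary θ).1 = diagonal fun i => ((θ i).1 : ℂ) :=
  rfl

/-- Permutation matrices as unitaries. `Equiv.Perm.permMatrix` reverses products, so `σ` is sent to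
the matrix of `σ⁻¹`. -/
def permUnitary : Equiv.Perm n →* unitaryGroup n ℂ :=
  permMatrixHom.codRestrict _ fun σ => by
    simp [mem_unitaryGroup_iff, star_eq_conjTranspose, ← permMatrix_mul]

lemma coe_permUnitary (σ : Equiv.Perm n) : (permUnitary σ).1 = (σ⁻¹).permMatrix ℂ :=
  rfl

lemma tensorConj_permUnitary (σ : Equiv.Perm n) (x : Matrix (n × n) (n × n) ℂ) :
    tensorConj (permUnitary σ) x =
      x.submatrix (Prod.map ⇑σ⁻¹ ⇑σ⁻¹) (Prod.map ⇑σ⁻¹ ⇑σ⁻¹) := by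
  rw [tensorConj_apply, coe_permUnitary, kronecker_permMatrix, conjTranspose_permMatrix,
    PEquiv.mul_toMatrix_toPEquiv, PEquiv.toMatrix_toPEquiv_mul]
  rfl

lemma commute_kronecker_permUnitary_coincidenceProj (σ : Equiv.Perm n) :
    Commute ((permUnitary σ).1 ⊗ₖ (permUnitary σ).1) (coincidenceProj n) := by
  rw [commute_iff_eq, coe_permUnitary, kronecker_permMatrix, PEquiv.toMatrix_toPEquiv_mul]
  ext p q
  simp [coincidenceProj, PEquiv.toMatrix_apply, diagonal_apply]

lemma commute_kronecker_phaseUnitary_coincidenceProj {k : ℕ} [NeZero k]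
    (θ : n → rootsOfUnity k ℂ) :
    Commute ((phaseUnitary θ).1 ⊗ₖ (phaseUnitary θ).1) (coincidenceProj n) := by
  rw [coe_phaseUnitary, diagonal_kronecker_diagonal, coincidenceProj]
  exact commute_diagonal _ _

lemma tensorConj_phaseUnitary_apply {k : ℕ} [NeZero k] (θ : n → rootsOfUnity k ℂ)
    (x : Matrix (n × n) (n × n) ℂ) (p q : n × n) :
    tensorConj (phaseUnitary θ) x p q =
      ((θ p.1 * θ p.2).1 : ℂ) * x p q * conj ((θ q.1 * θ q.2).1 : ℂ) := by
  rw [tensorConj_apply, coe_phaseUnitary, diagonal_kronecker_diagonal, diagonal_conjTranspose,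
    mul_diagonal, diagonal_mul]
  rfl

lemma isPairPreserving_of_tensorConj_phaseUnitary {x : Matrix (n × n) (n × n) ℂ}
    (hx : ∀ θ : n → rootsOfUnity 3 ℂ, tensorConj (phaseUnitary θ) x = x) :
    IsPairPreserving x := by
  intro p q hpq
  by_contra hxpq
  let ζ := (Complex.isPrimitiveRoot_exp 3 three_ne_zero).toRootsOfUnity
  have hζ : IsPrimitiveRoot ζ 3 :=
    IsPrimitiveRoot.coe_submonoidClass_iff.1 <| IsPrimitiveRoot.coe_units_iff.1 <|
      Complex.isPrimitiveRoot_exp 3 three_ne_zero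
  have hζζ : ζ * ζ ≠ 1 := sq ζ ▸ hζ.pow_ne_one_of_pos_of_lt two_ne_zero (by norm_num)
  refine hpq (sym2_eq_of_forall_mul_eq (hζ.ne_one (by norm_num)) hζζ fun θ => ?_)
  have hmul := congrFun₂ (hx θ) p q
  rw [tensorConj_phaseUnitary_apply, Complex.conj_rootsOfUnity (θ q.1 * θ q.2).2,
    mul_right_comm, mul_eq_right₀ hxpq, ← Units.val_mul, Units.val_eq_one,
    mul_inv_eq_one] at hmul
  exact Subtype.ext hmul

lemma exists_isPairPreserving_mem_effectiveInteractions (h : Matrix (n × n) (n × n) ℂ) :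
    ∃ x ∈ effectiveInteractions h, IsPairPreserving x ∧
      (x * coincidenceProj n).trace = (h * coincidenceProj n).trace := by
  obtain ⟨x, hx, hinv⟩ :=
    exists_invariant_mem_convexHull_orbit (tensorConj.comp (phaseUnitary (n := n) (k := 3))) h
  exact ⟨x, mem_effectiveInteractions_of_mem_convexHull hx,
    isPairPreserving_of_tensorConj_phaseUnitary hinv,
    trace_mul_eq_of_mem_convexHull commute_kronecker_phaseUnitary_coincidenceProj hx⟩

lemma exists_flat_unitary (n : Type*) [Fintype n] [DecidableEq n] :
    ∃ w : unitaryGroup n ℂ, ∀ i j, w i j * conj (w i j) = (Fintype.card n : ℂ)⁻¹ := by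
  rcases isEmpty_or_nonempty n with hn | hn
  · exact ⟨1, fun i => hn.elim i⟩
  set d := Fintype.card n with hd
  have : NeZero d := ⟨Fintype.card_ne_zero⟩
  have hd0 : (d : ℂ) ≠ 0 := NeZero.ne _
  let e : n ≃ ZMod d := Fintype.equivOfCardEq (by simp [hd])
  let ψ : AddChar (ZMod d) ℂ := ZMod.stdAddChar
  let c : ℂ := ((√d)⁻¹ : ℝ)
  have hc : c * conj c = (d : ℂ)⁻¹ := by
    rw [Complex.conj_ofReal, ← Complex.ofReal_mul, ← mul_inv, Real.mul_self_sqrt d.cast_nonneg]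
    simp
  let w : Matrix n n ℂ := of fun i j => c * ψ (e j * e i)
  have hw (i j k : n) : w i k * conj (w j k) = (d : ℂ)⁻¹ * ψ (e k * (e i - e j)) := by
    rw [mul_sub, sub_eq_add_neg, AddChar.map_add_eq_mul, AddChar.map_neg_eq_conj, ← hc]
    simp only [w, of_apply, map_mul]
    ring
  refine ⟨⟨w, mem_unitaryGroup_iff.2 ?_⟩, fun i j => by simpa using hw i i j⟩
  ext i j
  calc ∑ k, w i k * conj (w j k) = (d : ℂ)⁻¹ * ∑ a, ψ (a * (e i - e j)) := by
        simp only [hw, Finset.mul_sum]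
        exact e.sum_comp fun a => (d : ℂ)⁻¹ * ψ (a * (e i - e j))
    _ = (1 : Matrix n n ℂ) i j := by
        rw [AddChar.sum_mulShift _ (ZMod.isPrimitive_stdAddChar d)]
        simp [one_apply, sub_eq_zero, apply_ite, hd0]

namespace IsPairPreserving

variable {x : Matrix (n × n) (n × n) ℂ}

lemma of_mem_convexHull_tensorConj_permUnitary (hx : IsPairPreserving x)
    {y : Matrix (n × n) (n × n) ℂ}
    (hy : y ∈ convexHull ℝ (Set.range fun σ => tensorConj (permUnitary σ) x)) :
    IsPairPreserving y := by
  intro p q hpq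
  refine linearMap_eq_of_mem_convexHull (entryLinearMap ℝ ℂ p q)
    (Set.forall_mem_range.2 fun σ => ?_) hy
  rw [tensorConj_permUnitary]
  exact hx _ _ fun h => hpq (Sym2.map.injective (σ⁻¹).injective h)

lemma sum_apply_eq (hx : IsPairPreserving x) :
    ∑ p, ∑ q, x p q =
      x.trace + (x * swapMatrix n).trace - (x * coincidenceProj n).trace := by
  simp_rw [trace_mul_swapMatrix, trace_mul_coincidenceProj]
  have hdiag : ∑ i, x (i, i) (i, i) = ∑ p : n × n, if p.1 = p.2 then x p p else 0 := by
    simp [Fintype.sum_prod_type]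
  rw [hdiag, Matrix.trace, ← Finset.sum_add_distrib, ← Finset.sum_sub_distrib]
  refine Finset.sum_congr rfl fun p _ => ?_
  rw [Finset.sum_congr rfl fun q _ => hx.apply_eq p q, Finset.sum_sub_distrib,
    Finset.sum_add_distrib]
  simp [ite_and]

lemma tensorConj_apply_self (hx : IsPairPreserving x) {w : unitaryGroup n ℂ} {c : ℂ}
    (hw : ∀ i j, w i j * conj (w i j) = c) (i : n) :
    tensorConj w x (i, i) (i, i) = c ^ 2 * ∑ p, ∑ q, x p q := by
  have hterm (p q : n × n) :
      w i p.1 * w i p.2 * x p q * conj (w i q.1 * w i q.2) = c ^ 2 * x p q := by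
    by_cases hpq : s(p.1, p.2) = s(q.1, q.2)
    · have hphase : w i q.1 * w i q.2 = w i p.1 * w i p.2 := by
        rcases Sym2.eq_iff.1 hpq with ⟨h1, h2⟩ | ⟨h1, h2⟩ <;> rw [h1, h2]
        exact mul_comm _ _
      rw [hphase, map_mul]
      linear_combination x p q * (conj (w i p.2) * w i p.2 * hw i p.1 + c * hw i p.2)
    · simp [hx p q hpq]
  calc tensorConj w x (i, i) (i, i)
      = ∑ q, (∑ p, w i p.1 * w i p.2 * x p q) * conj (w i q.1 * w i q.2) := rfl
    _ = ∑ q, ∑ p, c ^ 2 * x p q := by simp only [Finset.sum_mul, hterm]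
    _ = c ^ 2 * ∑ p, ∑ q, x p q := by rw [Finset.sum_comm]; simp only [Finset.mul_sum]

lemma card_mul_trace_tensorConj (hx : IsPairPreserving x) {w : unitaryGroup n ℂ}
    (hw : ∀ i j, w i j * conj (w i j) = (Fintype.card n : ℂ)⁻¹) :
    Fintype.card n * (tensorConj w x * coincidenceProj n).trace =
      x.trace + (x * swapMatrix n).trace - (x * coincidenceProj n).trace := by
  rw [trace_mul_coincidenceProj, ← hx.sum_apply_eq]
  rcases isEmpty_or_nonempty n with hn | hn
  · simp
  simp only [hx.tensorConj_apply_self hw, Finset.sum_const, Finset.card_univ, nsmul_eq_mul]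
  field_simp

lemma eq_zero_of_perm_invariant (hx : IsPairPreserving x)
    (hperm : ∀ σ, tensorConj (permUnitary σ) x = x) (htr : x.trace = 0)
    (hswap : (x * swapMatrix n).trace = 0) (hdiag : (x * coincidenceProj n).trace = 0) :
    x = 0 := by
  have hinv (σ : Equiv.Perm n) (p q : n × n) : x (p.map σ σ) (q.map σ σ) = x p q := by
    have hentry := congrFun₂ (hperm σ⁻¹) p q
    rwa [tensorConj_permUnitary, inv_inv] at hentry
  rw [trace_mul_swapMatrix] at hswap
  rw [trace_mul_coincidenceProj] at hdiag
  have hdirect (p : n × n) : x p p = 0 :=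
    congrFun (eq_zero_of_perm_invariant_of_sum_eq_zero (f := fun p => x p p)
      (fun σ i j => hinv σ (i, j) (i, j)) htr hdiag) p
  have hexchange (p : n × n) : x p p.swap = 0 :=
    congrFun (eq_zero_of_perm_invariant_of_sum_eq_zero (f := fun p => x p p.swap)
      (fun σ i j => hinv σ (i, j) (j, i)) hswap hdiag) p
  ext p q
  rw [hx.apply_eq p q, hdirect, hexchange]
  simp

lemma zero_mem_effectiveInteractions (hx : IsPairPreserving x) (htr : x.trace = 0)
    (hswap : (x * swapMatrix n).trace = 0) (hdiag : (x * coincidenceProj n).trace = 0) :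
    0 ∈ effectiveInteractions x := by
  obtain ⟨y, hy, hinv⟩ :=
    exists_invariant_mem_convexHull_orbit (tensorConj.comp (permUnitary (n := n))) x
  have hyx := mem_effectiveInteractions_of_mem_convexHull hy
  suffices y = 0 from this ▸ hyx
  refine (hx.of_mem_convexHull_tensorConj_permUnitary hy).eq_zero_of_perm_invariant hinv ?_ ?_ ?_
  · rw [trace_eq_of_mem_effectiveInteractions hyx, htr]
  · rw [trace_mul_swapMatrix_eq_of_mem_effectiveInteractions hyx, hswap]
  · rw [trace_mul_eq_of_mem_convexHull commute_kronecker_permUnitary_coincidenceProj hy, hdiag]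

lemma exists_mem_effectiveInteractions_trace_coincidenceProj_eq_zero (hx : IsPairPreserving x)
    (htr : x.trace = 0) (hswap : (x * swapMatrix n).trace = 0) :
    ∃ y ∈ effectiveInteractions x, (y * coincidenceProj n).trace = 0 := by
  obtain ⟨w, hw⟩ := exists_flat_unitary n
  set d := Fintype.card n
  have hxx : x ∈ effectiveInteractions x := by
    simpa using tensorConj_mem_effectiveInteractions 1 x
  refine ⟨((d : ℝ) + 1)⁻¹ • x + (d / (d + 1) : ℝ) • tensorConj w x,
    convex_convexHull ℝ _ hxx (tensorConj_mem_effectiveInteractions w x) (by positivity)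
      (by positivity) (by field_simp; ring), ?_⟩
  have hbalance := hx.card_mul_trace_tensorConj hw
  rw [htr, hswap] at hbalance
  rw [Matrix.add_mul, smul_mul, smul_mul, trace_add, trace_smul, trace_smul]
  simp only [Complex.real_smul]
  push_cast
  field_simp
  linear_combination hbalance

end IsPairPreserving

theorem decoupling_iff_traceless_general (h : Matrix (n × n) (n × n) ℂ) :
    (∃ (k : ℕ) (u : Fin k → Matrix n n ℂ) (α : Fin k → ℝ),
      (∀ i, u i ∈ unitaryGroup n ℂ) ∧ (∀ i, 0 ≤ α i) ∧ (∑ i, α i = 1) ∧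
      ∑ i, (α i : ℂ) • ((u i ⊗ₖ u i)ᴴ * h * (u i ⊗ₖ u i)) = 0) ↔
    h.trace = 0 ∧ (h * swapMatrix n).trace = 0 := by
  rw [← mem_effectiveInteractions_iff]
  constructor
  · intro hzero
    rw [← trace_eq_of_mem_effectiveInteractions hzero,
      ← trace_mul_swapMatrix_eq_of_mem_effectiveInteractions hzero]
    simp
  · rintro ⟨htr, hswap⟩
    have htraces {y : Matrix (n × n) (n × n) ℂ} (hy : y ∈ effectiveInteractions h) :
        y.trace = 0 ∧ (y * swapMatrix n).trace = 0 :=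
      ⟨(trace_eq_of_mem_effectiveInteractions hy).trans htr,
        (trace_mul_swapMatrix_eq_of_mem_effectiveInteractions hy).trans hswap⟩
    obtain ⟨x, hxh, hx, -⟩ := exists_isPairPreserving_mem_effectiveInteractions h
    obtain ⟨y, hyx, hy⟩ :=
      hx.exists_mem_effectiveInteractions_trace_coincidenceProj_eq_zero (htraces hxh).1
        (htraces hxh).2
    obtain ⟨z, hzy, hz, hzdiag⟩ := exists_isPairPreserving_mem_effectiveInteractions y
    have hyh := effectiveInteractions_subset hxh hyx
    have hzh := effectiveInteractions_subset hyh hzy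
    exact effectiveInteractions_subset hzh <|
      hz.zero_mem_effectiveInteractions (htraces hzh).1 (htraces hzh).2 (hzdiag.trans hy)

end EffectiveInteractions

lemma swapOp_eq_swapMatrix (d : ℕ) : swapOp d = swapMatrix (Fin d) := by
  ext p q
  simp [swapOp, swapMatrix, PEquiv.toMatrix_apply, Prod.ext_iff, and_comm]

/-- For a traceless Hermitian two-qudit interaction `h`, there exists a decoupling pulse
sequence iff `tr (h Π_d) = 0`. -/
theorem decoupling_iff_traceless (d : ℕ) (hd : 2 ≤ d)
    (h : Matrix (Fin d × Fin d) (Fin d × Fin d) ℂ)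
    (hherm : h.IsHermitian) (htr : h.trace = 0) :
    (∃ (k : ℕ) (u : Fin k → Matrix (Fin d) (Fin d) ℂ) (α : Fin k → ℝ),
      (∀ i, u i ∈ Matrix.unitaryGroup (Fin d) ℂ) ∧
      (∀ i, 0 ≤ α i) ∧ (∑ i, α i = 1) ∧
      ∑ i, (α i : ℂ) • ((u i ⊗ₖ u i)ᴴ * h * (u i ⊗ₖ u i)) = 0) ↔
    (h * swapOp d).trace = 0 := by
  rw [decoupling_iff_traceless_general, swapOp_eq_swapMatrix, and_iff_right htr]
end

section
/- Let d ≥ 2, let h be any d²×d² complex matrix, let u_1,…,u_k be unitary d×d matrices, and let α_1,…,α_k be reals with Σ_i α_i = 1. Then the effective interaction h_eff = Σ_i α_i (u_i ⊗ u_i)† h (u_i ⊗ u_i) satisfies tr(h_eff Π_d) = tr(h Π_d); in particular the isotropic strength tr(h Π_d) is conserved under any global pulse sequence. -/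
open Matrix Kronecker
open scoped BigOperators

/-!
The swap intertwines `A ⊗ B` with `B ⊗ A`, so it commutes with every `u ⊗ u`. When `u` is unitary,
cyclicity of the trace then cancels `u ⊗ u` against its adjoint, so each pulse preserves
`tr (h Π)`, and a weighted sum of pulses multiplies it by the total weight.
-/

section Kronecker

variable {l m n p R : Type*}

variable (m n R) in
/-- The permutation matrix exchanging the two tensor factors, also called the commutation matrix.
The factors may have different dimensions; its rows are indexed by `m × n` and its columns by
`n × m`, so it sends `v ⊗ w` to `w ⊗ v` for `v : n → R` and `w : m → R`. -/
def tensorSwap [DecidableEq m] [DecidableEq n] [Zero R] [One R] : Matrix (m × n) (n × m) R :=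
  (Equiv.prodComm m n).toPEquiv.toMatrix

variable [CommSemiring R]

theorem kronecker_mul_tensorSwap [Fintype l] [Fintype m] [Fintype n] [Fintype p]
    [DecidableEq l] [DecidableEq m] [DecidableEq n] [DecidableEq p]
    (A : Matrix l m R) (B : Matrix n p R) :
    (A ⊗ₖ B) * tensorSwap m p R = tensorSwap l n R * (B ⊗ₖ A) := by
  rw [tensorSwap, tensorSwap, PEquiv.mul_toMatrix_toPEquiv, PEquiv.toMatrix_toPEquiv_mul]
  ext ⟨i, j⟩ ⟨j', i'⟩
  exact mul_comm (A i i') (B j j')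

theorem commute_kronecker_self_tensorSwap [Fintype n] [DecidableEq n] (A : Matrix n n R) :
    Commute (A ⊗ₖ A) (tensorSwap n n R) :=
  kronecker_mul_tensorSwap A A

end Kronecker

section Trace

variable {ι n R : Type*} [Fintype n] [DecidableEq n] [CommSemiring R]

theorem trace_conj_mul_of_commute {U V S : Matrix n n R} (hUV : U * V = 1) (hUS : Commute U S)
    (A : Matrix n n R) : (V * A * U * S).trace = (A * S).trace :=
  calc (V * A * U * S).trace
      = (V * (A * S * U)).trace := by simp only [mul_assoc, hUS.eq]
    _ = (A * S * U * V).trace := trace_mul_comm _ _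
    _ = (A * S).trace := by rw [mul_assoc, hUV, mul_one]

theorem trace_sum_smul_conj_mul_of_commute [Fintype ι] {U V : ι → Matrix n n R} {S : Matrix n n R}
    (hUV : ∀ i, U i * V i = 1) (hUS : ∀ i, Commute (U i) S) (w : ι → R) (A : Matrix n n R) :
    ((∑ i, w i • (V i * A * U i)) * S).trace = (∑ i, w i) * (A * S).trace := by
  simp only [Finset.sum_mul, trace_sum, smul_mul, trace_smul, smul_eq_mul,
    trace_conj_mul_of_commute (hUV _) (hUS _)]

end Trace

theorem isotropic_strength_conserved_general {ι n R : Type*} [Fintype ι] [Fintype n]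
    [DecidableEq n] [CommRing R] [StarRing R] {u : ι → Matrix n n R}
    (hu : ∀ i, u i ∈ unitaryGroup n R) (w : ι → R) (h : Matrix (n × n) (n × n) R) :
    ((∑ i, w i • ((u i ⊗ₖ u i)ᴴ * h * (u i ⊗ₖ u i))) * tensorSwap n n R).trace =
      (∑ i, w i) * (h * tensorSwap n n R).trace :=
  trace_sum_smul_conj_mul_of_commute
    (fun i ↦ mem_unitaryGroup_iff.mp (kronecker_mem_unitary (hu i) (hu i)))
    (fun i ↦ commute_kronecker_self_tensorSwap (u i)) w h

theorem swapOp_eq_tensorSwap (d : ℕ) : swapOp d = tensorSwap (Fin d) (Fin d) ℂ := by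
  ext ⟨i, j⟩ ⟨k, l⟩
  simp [swapOp, tensorSwap, PEquiv.toMatrix_apply, and_comm]

/-- The isotropic strength `tr (h Π_d)` is conserved under any global pulse sequence. -/
theorem isotropic_strength_conserved (d : ℕ) (hd : 2 ≤ d)
    (h : Matrix (Fin d × Fin d) (Fin d × Fin d) ℂ)
    (k : ℕ) (u : Fin k → Matrix (Fin d) (Fin d) ℂ)
    (hu : ∀ i, u i ∈ Matrix.unitaryGroup (Fin d) ℂ)
    (α : Fin k → ℝ) (hα : ∑ i, α i = 1) :
    ((∑ i, (α i : ℂ) • ((u i ⊗ₖ u i)ᴴ * h * (u i ⊗ₖ u i))) * swapOp d).trace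
      = (h * swapOp d).trace := by
  rw [swapOp_eq_tensorSwap, isotropic_strength_conserved_general hu,
    ← Complex.ofReal_sum, hα, Complex.ofReal_one, one_mul]
end

section
/- (Uniqueness of the isotropic component) Let d ≥ 2 and let h be a d²×d² complex matrix that commutes with u ⊗ u for every unitary d×d matrix u. Then there exist complex numbers a and b such that h = a·I + b·Π_d, where I is the d²×d² identity and Π_d is the swap operator. -/
open Matrix Kronecker

/-!
Three kinds of unitaries suffice. Let `z` be a unitary scalar with `z ^ 2 ≠ 1`.

* The diagonal unitary with `z` at `m` and `1` elsewhere acts on `e_i ⊗ e_j` by `z ^ r`, where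
  `r ≤ 2` counts the occurrences of `m` in `{i, j}`. As `1, z, z ^ 2` are distinct, `h` can only
  have nonzero entries between `e_i ⊗ e_j` and itself or `e_j ⊗ e_i`.
* Permutation matrices make these entries independent of the indices: there remain the values
  `c` at `e_i ⊗ e_i`, and `a` (diagonal) and `b` (off-diagonal) at `e_i ⊗ e_j` for `i ≠ j`.
* A unitary `u` with `u x x` and `u x y` nonzero forces `c = a + b`. Such a `u` is obtained from
  the transposition of `x` and `y` by replacing its eigenvalue `-1` by `z`.
-/

section Commute

variable {m R : Type*} [Fintype m] [DecidableEq m]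

lemma apply_eq_zero_of_commute_diagonal [CommSemiring R] [IsCancelMulZero R]
    {M : Matrix m m R} {w : m → R} (hM : Commute M (diagonal w)) {p q : m} (hw : w p ≠ w q) :
    M p q = 0 := by
  by_contra hpq
  have hentry : M p q * w q = w p * M p q := by
    simpa using congrFun₂ hM.eq p q
  exact hw (mul_left_cancel₀ hpq (by rw [hentry, mul_comm]))

lemma apply_perm_of_commute_permMatrix [NonAssocSemiring R] {M : Matrix m m R} {σ : Equiv.Perm m}
    (hM : Commute M (σ.permMatrix R)) (p q : m) : M (σ p) (σ q) = M p q := by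
  have hentry := congrFun₂ hM.eq p (σ q)
  rw [PEquiv.mul_toMatrix_toPEquiv, PEquiv.toMatrix_toPEquiv_mul] at hentry
  simpa using hentry.symm

end Commute

section Unitary

lemma smul_one_add_smul_mem_unitary {R A : Type*} [CommRing R] [StarRing R] [Ring A]
    [StarRing A] [Algebra R A] [StarModule R A] {a b : R} (hab : a * star a + b * star b = 1)
    (hab' : a * star b + b * star a = 0) {s : A} (hs : IsSelfAdjoint s) (hss : s * s = 1) :
    a • (1 : A) + b • s ∈ unitary A := by
  have hmul (a b c d : R) :
      (a • (1 : A) + b • s) * (c • 1 + d • s) = (a * c + b * d) • 1 + (a * d + b * c) • s := by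
    simp only [add_mul, mul_add, smul_mul_smul_comm, one_mul, mul_one, hss]
    module
  have hstar : star (a • (1 : A) + b • s) = star a • 1 + star b • s := by
    simp [hs.star_eq]
  rw [Unitary.mem_iff, hstar, hmul, hmul, mul_comm (star a) a, mul_comm (star b) b,
    mul_comm (star a) b, mul_comm (star b) a, add_comm (b * star a), hab, hab', one_smul,
    zero_smul, add_zero]
  exact ⟨rfl, rfl⟩

variable {m n R : Type*} [DecidableEq m] [DecidableEq n]

lemma permMatrix_kronecker_permMatrix [MulZeroOneClass R] (σ : Equiv.Perm n)
    (τ : Equiv.Perm m) :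
    σ.permMatrix R ⊗ₖ τ.permMatrix R = Equiv.Perm.permMatrix R (σ.prodCongr τ) := by
  ext ⟨i, j⟩ ⟨k, l⟩
  simp only [kroneckerMap_apply, PEquiv.toMatrix_toPEquiv_apply, Pi.single_apply,
    Equiv.prodCongr_apply, Prod.map_apply, Prod.mk.injEq, ite_and, ite_mul, one_mul, zero_mul]

lemma isSelfAdjoint_permMatrix_swap [NonAssocSemiring R] [StarRing R] (x y : n) :
    IsSelfAdjoint ((Equiv.swap x y).permMatrix R) := by
  rw [IsSelfAdjoint, star_eq_conjTranspose, conjTranspose_permMatrix, Equiv.swap_inv]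

variable [Fintype n]

lemma diagonal_mem_unitaryGroup [CommRing R] [StarRing R] {w : n → R}
    (hw : ∀ i, w i ∈ unitary R) : diagonal w ∈ unitaryGroup n R := by
  rw [mem_unitaryGroup_iff, star_eq_conjTranspose, diagonal_conjTranspose, diagonal_mul_diagonal,
    ← diagonal_one]
  exact congrArg diagonal (funext fun i => Unitary.mul_star_self_of_mem (hw i))

lemma permMatrix_mem_unitaryGroup [CommRing R] [StarRing R] (σ : Equiv.Perm n) :
    σ.permMatrix R ∈ unitaryGroup n R := by
  rw [mem_unitaryGroup_iff, star_eq_conjTranspose, conjTranspose_permMatrix, ← permMatrix_mul,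
    inv_mul_cancel, permMatrix_one]

lemma exists_mem_unitaryGroup_apply_ne_zero [CommRing R] [NoZeroDivisors R] [StarRing R]
    [Invertible (2 : R)] {z : R} (hz : z ∈ unitary R) (hz2 : z ^ 2 ≠ 1) {x y : n} (hxy : x ≠ y) :
    ∃ u ∈ unitaryGroup n R, u x x ≠ 0 ∧ u x y ≠ 0 := by
  have hzz : z * star z = 1 := Unitary.mul_star_self_of_mem hz
  have h2 : (⅟2 : R) * 2 = 1 := invOf_mul_self' 2
  have hadd : ⅟2 * (1 + z) ≠ 0 := fun h => hz2 <| by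
    linear_combination (2 * (z - 1)) * h - (z ^ 2 - 1) * h2
  have hsub : ⅟2 * (1 - z) ≠ 0 := fun h => hz2 <| by
    linear_combination (-2 * (z + 1)) * h - (z ^ 2 - 1) * h2
  refine ⟨(⅟2 * (1 + z)) • 1 + (⅟2 * (1 - z)) • (Equiv.swap x y).permMatrix R,
    smul_one_add_smul_mem_unitary ?_ ?_ (isSelfAdjoint_permMatrix_swap x y) ?_, ?_, ?_⟩
  · simp only [star_mul, star_add, star_sub, star_one, star_invOf, star_ofNat]
    linear_combination (2 * ⅟2 ^ 2) * hzz + (2 * ⅟2 + 1) * h2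
  · simp only [star_mul, star_add, star_sub, star_one, star_invOf, star_ofNat]
    linear_combination (-2 * ⅟2 ^ 2) * hzz
  · rw [← permMatrix_mul, Equiv.swap_mul_self, permMatrix_one]
  · simpa [hxy.symm, Pi.single_apply] using hadd
  · simpa [hxy] using hsub

end Unitary

section SymmetricSupport

variable {n R : Type*} [DecidableEq n]

lemma mulSingle_mul_mulSingle [Monoid R] (z : R) (m i j : n) :
    (Pi.mulSingle m z : n → R) i * (Pi.mulSingle m z : n → R) j = z ^ Multiset.count m {i, j} := by
  rw [Multiset.insert_eq_cons, Multiset.count_cons, Multiset.count_singleton, add_comm, pow_add]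
  simp only [Pi.mulSingle_apply, pow_ite, pow_one, pow_zero, eq_comm]

lemma injOn_pow_Iic_two [Monoid R] {z : R} (hz : IsUnit z) (hz2 : z ^ 2 ≠ 1) :
    Set.InjOn (z ^ ·) (Set.Iic 2) := by
  have hz1 : z ≠ 1 := by
    rintro rfl
    exact hz2 (one_pow 2)
  have hz12 : z ≠ z ^ 2 := fun h => hz1 (hz.mul_left_cancel (by rw [← sq, ← h, mul_one]))
  intro a ha b hb hab
  simp only [Set.mem_Iic] at ha hb
  interval_cases a <;> interval_cases b <;> simp_all [eq_comm]

lemma exists_mulSingle_mul_mulSingle_ne [Monoid R] {z : R} (hz : IsUnit z) (hz2 : z ^ 2 ≠ 1)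
    {i j k l : n} (hne : s(i, j) ≠ s(k, l)) :
    ∃ m, (Pi.mulSingle m z : n → R) i * (Pi.mulSingle m z : n → R) j ≠
      (Pi.mulSingle m z : n → R) k * (Pi.mulSingle m z : n → R) l := by
  have hcount (m p q : n) : Multiset.count m {p, q} ∈ Set.Iic 2 :=
    Multiset.count_le_card m {p, q}
  contrapose! hne
  have hpair : ({i, j} : Multiset n) = {k, l} := Multiset.ext.mpr fun m =>
    injOn_pow_Iic_two hz hz2 (hcount m i j) (hcount m k l) <| by
      simpa only [mulSingle_mul_mulSingle] using hne m
  exact (Sym2.equivMultiset n).injective (Subtype.ext hpair)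

variable [Fintype n]

lemma apply_eq_zero_of_commute_diagonal_kronecker [CommSemiring R] [IsCancelMulZero R] {z : R}
    (hz : IsUnit z) (hz2 : z ^ 2 ≠ 1) {M : Matrix (n × n) (n × n) R}
    (hM : ∀ m, Commute M (diagonal (Pi.mulSingle m z) ⊗ₖ diagonal (Pi.mulSingle m z)))
    {i j k l : n} (hne : s(i, j) ≠ s(k, l)) : M (i, j) (k, l) = 0 := by
  obtain ⟨m, hm⟩ := exists_mulSingle_mul_mulSingle_ne hz hz2 hne
  have hcomm := hM m
  rw [diagonal_kronecker_diagonal] at hcomm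
  exact apply_eq_zero_of_commute_diagonal hcomm hm

end SymmetricSupport

lemma apply_diag_eq_add_of_commute_kronecker {n R : Type*} [Fintype n] [CommSemiring R]
    [IsCancelMulZero R] {M : Matrix (n × n) (n × n) R}
    (hsupp : ∀ i j k l, s(i, j) ≠ s(k, l) → M (i, j) (k, l) = 0)
    {u : Matrix n n R} (hM : Commute M (u ⊗ₖ u)) {x y : n} (hxy : x ≠ y)
    (huxx : u x x ≠ 0) (huxy : u x y ≠ 0) :
    M (x, x) (x, x) = M (x, y) (x, y) + M (y, x) (x, y) := by
  classical
  have hleft : (M * (u ⊗ₖ u)) (x, x) (x, y) = M (x, x) (x, x) * (u x x * u x y) := by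
    rw [mul_apply, Fintype.sum_eq_single (x, x), kronecker_apply]
    rintro ⟨i, j⟩ hij
    rw [hsupp _ _ _ _ (by grind [Sym2.eq_iff]), zero_mul]
  have hright : ((u ⊗ₖ u) * M) (x, x) (x, y) =
      u x x * u x y * M (x, y) (x, y) + u x y * u x x * M (y, x) (x, y) := by
    rw [mul_apply, Fintype.sum_eq_add (x, y) (y, x) (by simp [hxy]), kronecker_apply,
      kronecker_apply]
    rintro ⟨i, j⟩ ⟨hij, hij'⟩
    rw [hsupp _ _ _ _ (by grind [Sym2.eq_iff]), mul_zero]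
  have hentry := congrFun₂ hM.eq (x, x) (x, y)
  rw [hleft, hright] at hentry
  exact mul_right_cancel₀ (mul_ne_zero huxx huxy) (by rw [hentry]; ring)

lemma eq_smul_one_add_smul_permMatrix_prodComm {n R : Type*} [DecidableEq n] [Semiring R]
    {M : Matrix (n × n) (n × n) R}
    (hsupp : ∀ i j k l, s(i, j) ≠ s(k, l) → M (i, j) (k, l) = 0) {a b : R}
    (hdiag : ∀ i, M (i, i) (i, i) = a + b) (hid : ∀ i j, i ≠ j → M (i, j) (i, j) = a)
    (hswap : ∀ i j, i ≠ j → M (i, j) (j, i) = b) :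
    M = a • 1 + b • Equiv.Perm.permMatrix R (Equiv.prodComm n n) := by
  ext ⟨i, j⟩ ⟨k, l⟩
  by_cases hsymm : s(i, j) = s(k, l)
  · obtain ⟨rfl, rfl⟩ | ⟨rfl, rfl⟩ := Sym2.eq_iff.mp hsymm
    · obtain rfl | hij := eq_or_ne i j
      · simp [hdiag]
      · simp [hid, hij]
    · obtain rfl | hij := eq_or_ne i j
      · simp [hdiag]
      · simp [hswap, hij, one_apply]
  · rw [hsupp _ _ _ _ hsymm]
    rw [Sym2.eq_iff, not_or] at hsymm
    simp [one_apply, hsymm.1, hsymm.2, and_comm]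

section Pretransitive

variable {G α β : Type*} [Nonempty β]

lemma exists_forall_eq_of_forall_smul_eq [SMul G α] [MulAction.IsPretransitive G α] {f : α → β}
    (hf : ∀ (g : G) i, f (g • i) = f i) : ∃ c, ∀ i, f i = c := by
  obtain _ | ⟨⟨x⟩⟩ := isEmpty_or_nonempty α
  · exact ⟨Classical.arbitrary β, isEmptyElim⟩
  · refine ⟨f x, fun i => ?_⟩
    obtain ⟨g, rfl⟩ := MulAction.exists_smul_eq G x i
    exact hf g x

lemma exists_forall_ne_eq_of_forall_smul_eq [Group G] [MulAction G α]
    [MulAction.IsMultiplyPretransitive G α 2] {f : α → α → β}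
    (hf : ∀ (g : G) i j, f (g • i) (g • j) = f i j) :
    ∃ c, ∀ i j, i ≠ j → f i j = c := by
  obtain _ | ⟨x, y, hxy⟩ := subsingleton_or_nontrivial α
  · exact ⟨Classical.arbitrary β, fun i j hij => absurd (Subsingleton.elim i j) hij⟩
  · refine ⟨f x y, fun i j hij => ?_⟩
    obtain ⟨g, rfl, rfl⟩ := MulAction.is_two_pretransitive_iff.mp ‹_› hxy hij
    exact hf g x y

end Pretransitive

theorem commutant_of_diagonal_unitaries_general {n R : Type*} [Fintype n] [DecidableEq n]
    [CommRing R] [NoZeroDivisors R] [StarRing R] [Invertible (2 : R)]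
    {z : R} (hz : z ∈ unitary R) (hz2 : z ^ 2 ≠ 1) {h : Matrix (n × n) (n × n) R}
    (hcomm : ∀ u ∈ unitaryGroup n R, Commute h (u ⊗ₖ u)) :
    ∃ a b : R, h = a • 1 + b • Equiv.Perm.permMatrix R (Equiv.prodComm n n) := by
  have hsupp (i j k l : n) (hne : s(i, j) ≠ s(k, l)) : h (i, j) (k, l) = 0 := by
    refine apply_eq_zero_of_commute_diagonal_kronecker (Unitary.isUnit_coe (U := ⟨z, hz⟩))
      hz2 (fun m => hcomm _ <| diagonal_mem_unitaryGroup fun i => ?_) hne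
    obtain rfl | hi := eq_or_ne i m <;> simp [*]
  have hperm (σ : Equiv.Perm n) (p q : n × n) : h (p.map σ σ) (q.map σ σ) = h p q := by
    have hσ := hcomm _ (permMatrix_mem_unitaryGroup σ)
    rw [permMatrix_kronecker_permMatrix] at hσ
    exact apply_perm_of_commute_permMatrix hσ p q
  have := Equiv.Perm.isMultiplyPretransitive n 2
  obtain ⟨c, hc⟩ : ∃ c, ∀ i, h (i, i) (i, i) = c :=
    exists_forall_eq_of_forall_smul_eq fun (σ : Equiv.Perm n) i => hperm σ (i, i) (i, i)
  obtain ⟨b, hb⟩ : ∃ b, ∀ i j, i ≠ j → h (i, j) (j, i) = b :=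
    exists_forall_ne_eq_of_forall_smul_eq fun (σ : Equiv.Perm n) i j => hperm σ (i, j) (j, i)
  refine ⟨c - b, b, eq_smul_one_add_smul_permMatrix_prodComm hsupp (fun i => ?_)
    (fun i j hij => ?_) hb⟩
  · rw [hc, sub_add_cancel]
  · obtain ⟨u, hu, huii, huij⟩ := exists_mem_unitaryGroup_apply_ne_zero hz hz2 hij
    have hsum := apply_diag_eq_add_of_commute_kronecker hsupp (hcomm u hu) hij huii huij
    rw [hc, hb j i hij.symm] at hsum
    exact (sub_eq_of_eq_add hsum).symm

lemma swapOp_eq_permMatrix (d : ℕ) :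
    swapOp d = Equiv.Perm.permMatrix ℂ (Equiv.prodComm (Fin d) (Fin d)) := by
  ext ⟨i, j⟩ ⟨k, l⟩
  simp [swapOp, and_comm]

/-- Any `d²×d²` matrix commuting with `u ⊗ u` for every unitary `u` is a linear
combination of the identity and the swap operator. -/
theorem commutant_of_diagonal_unitaries (d : ℕ) (hd : 2 ≤ d)
    (h : Matrix (Fin d × Fin d) (Fin d × Fin d) ℂ)
    (hcomm : ∀ u : Matrix (Fin d) (Fin d) ℂ, u ∈ Matrix.unitaryGroup (Fin d) ℂ →
      h * (u ⊗ₖ u) = (u ⊗ₖ u) * h) :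
    ∃ a b : ℂ, h = a • (1 : Matrix (Fin d × Fin d) (Fin d × Fin d) ℂ) + b • swapOp d := by
  rw [swapOp_eq_permMatrix]
  exact commutant_of_diagonal_unitaries_general (z := Complex.I) (by simp [Unitary.mem_iff])
    (by norm_num [Complex.I_sq]) hcomm
end

section
/- (Engineering SPT Hamiltonians from Ising interactions) Let S^x, S^y, S^z be the spin-1 matrices on ℂ³ and define the 9×9 matrices h_1 = Σ_{a∈{x,y,z}} S^a ⊗ S^a, h_2 = h_1², and h_3 = Σ_{(a,b,c)} (S^a S^b ⊗ S^c + S^a ⊗ S^b S^c), where the sum runs over all six permutations (a,b,c) of (x,y,z). Then for all real numbers p, q with 2|q| ≤ p ≤ 2 − 2|q|, there exist finitely many unitary 3×3 matrices u_1,…,u_k, reals α_1,…,α_k ≥ 0 with Σ_i α_i = 1, a real β > 0, and a real c such that Σ_i α_i (u_i ⊗ u_i)† (S^z ⊗ S^z) (u_i ⊗ u_i) = β (h_1 + p h_2 + q h_3) − c·I, where I is the 9×9 identity matrix. -/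
open Matrix Kronecker
open scoped BigOperators

/-- The spin-1 matrix `S^x` on `ℂ³`. -/
noncomputable def spinX : Matrix (Fin 3) (Fin 3) ℂ :=
  ((1 : ℂ) / Real.sqrt 2) • !![0, 1, 0; 1, 0, 1; 0, 1, 0]

/-- The spin-1 matrix `S^y` on `ℂ³`. -/
noncomputable def spinY : Matrix (Fin 3) (Fin 3) ℂ :=
  ((1 : ℂ) / Real.sqrt 2) •
    !![0, -Complex.I, 0; Complex.I, 0, -Complex.I; 0, Complex.I, 0]

/-- The spin-1 matrix `S^z` on `ℂ³`. -/
noncomputable def spinZ : Matrix (Fin 3) (Fin 3) ℂ :=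
  !![1, 0, 0; 0, 0, 0; 0, 0, -1]

/-- The spin-1 matrices indexed as `S 0 = S^x`, `S 1 = S^y`, `S 2 = S^z`. -/
noncomputable def spin : Fin 3 → Matrix (Fin 3) (Fin 3) ℂ := ![spinX, spinY, spinZ]

/-- The Heisenberg interaction `h₁ = Σ_a S^a ⊗ S^a`. -/
noncomputable def hOne : Matrix (Fin 3 × Fin 3) (Fin 3 × Fin 3) ℂ :=
  ∑ a : Fin 3, spin a ⊗ₖ spin a

/-- The biquadratic interaction `h₂ = h₁²`. -/
noncomputable def hTwo : Matrix (Fin 3 × Fin 3) (Fin 3 × Fin 3) ℂ := hOne * hOne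

/-- The interaction `h₃ = Σ_{(a,b,c) ∈ S₃} (S^a S^b ⊗ S^c + S^a ⊗ S^b S^c)`, summed over
all six permutations `(a,b,c)` of `(x,y,z)`. -/
noncomputable def hThree : Matrix (Fin 3 × Fin 3) (Fin 3 × Fin 3) ℂ :=
  ∑ σ : Equiv.Perm (Fin 3),
    ((spin (σ 0) * spin (σ 1)) ⊗ₖ spin (σ 2) + spin (σ 0) ⊗ₖ (spin (σ 1) * spin (σ 2)))

/-!
For each axis `k`, the matrices `S^k`, `{S^(k+1), S^(k+2)}` and `(S^(k+1))² - (S^(k+2))²` vanish on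
one vector and act on its orthogonal complement as the three Pauli matrices. A combination of them
with coefficients on the unit sphere therefore has the spectrum `1, 0, -1` of `S^z`, so it is a
unitary conjugate of `S^z`, and the two-site interactions reachable from `S^z ⊗ S^z` include every
convex combination of the tensor squares of such Bloch vectors.

Up to a multiple of the identity, `h₁ + p h₂ + q h₃` is a sum over the axes of quadratic expressions
in these matrices, with the same coefficients for each axis. The first two matrices enter through
the form `[[1 - p/2, q], [q, p/2]]` and the third with weight `p/3`. The form has trace one, and it
is a convex combination of two rank-one projections as soon as it is positive semidefinite, that is
`4q² ≤ p(2 - p)`.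
-/

theorem exists_unitary_conj_eq_of_charpoly_eq {n 𝕜 : Type*} [Fintype n] [DecidableEq n]
    [RCLike 𝕜] {A B : Matrix n n 𝕜} (hA : A.IsHermitian) (hB : B.IsHermitian)
    (h : A.charpoly = B.charpoly) : ∃ u ∈ unitaryGroup n 𝕜, uᴴ * A * u = B := by
  let U : Matrix n n 𝕜 := hA.eigenvectorUnitary
  let V : Matrix n n 𝕜 := hB.eigenvectorUnitary
  have hdiag : star U * A * U = diagonal (RCLike.ofReal ∘ hB.eigenvalues) := by
    rw [← (hA.eigenvalues_eq_eigenvalues_iff hB).mpr h, ← hA.conjStarAlgAut_star_eigenvectorUnitary,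
      Unitary.conjStarAlgAut_star_apply]
  refine ⟨U * star V,
    mul_mem hA.eigenvectorUnitary.2 (Unitary.star_mem hB.eigenvectorUnitary.2), ?_⟩
  calc (U * star V)ᴴ * A * (U * star V)
      = V * (star U * A * U) * star V := by
        simp only [← star_eq_conjTranspose, star_mul, star_star, Matrix.mul_assoc]
    _ = B := by
        rw [hdiag, ← Unitary.conjStarAlgAut_apply (S := 𝕜), ← hB.spectral_theorem]

theorem exists_pulses_of_unitary_conj {n ι : Type*} [Fintype n] [DecidableEq n] [Fintype ι]
    {Z : Matrix n n ℂ} {A : ι → Matrix n n ℂ} {w : ι → ℝ}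
    (hA : ∀ i, ∃ u ∈ unitaryGroup n ℂ, uᴴ * Z * u = A i) (hw : ∀ i, 0 ≤ w i)
    (hsum : ∑ i, w i = 1) :
    ∃ (k : ℕ) (u : Fin k → Matrix n n ℂ) (α : Fin k → ℝ),
      (∀ i, u i ∈ unitaryGroup n ℂ) ∧ (∀ i, 0 ≤ α i) ∧ ∑ i, α i = 1 ∧
      ∑ i, (α i : ℂ) • ((u i ⊗ₖ u i)ᴴ * (Z ⊗ₖ Z) * (u i ⊗ₖ u i)) =
        ∑ i, (w i : ℂ) • (A i ⊗ₖ A i) := by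
  choose u hu huA using hA
  have conj_kronecker (i : ι) : (u i ⊗ₖ u i)ᴴ * (Z ⊗ₖ Z) * (u i ⊗ₖ u i) = A i ⊗ₖ A i := by
    rw [conjTranspose_kronecker, ← mul_kronecker_mul, ← mul_kronecker_mul, huA]
  let e := (Fintype.equivFin ι).symm
  refine ⟨Fintype.card ι, u ∘ e, w ∘ e, fun i => hu _, fun i => hw _, ?_, ?_⟩
  · rw [← hsum]
    exact e.sum_comp w
  · simp only [Function.comp_apply, conj_kronecker]
    exact e.sum_comp fun i => (w i : ℂ) • (A i ⊗ₖ A i)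

section Kronecker

variable {l m R : Type*} [CommRing R]

theorem smul_kronecker_add_add_smul_kronecker_sub (A B : Matrix l m R) (x y c s : R) :
    x • ((c • A + s • B) ⊗ₖ (c • A + s • B)) + y • ((c • A - s • B) ⊗ₖ (c • A - s • B)) =
      (x + y) • (c ^ 2 • (A ⊗ₖ A) + s ^ 2 • (B ⊗ₖ B)) +
        ((x - y) * (c * s)) • (B ⊗ₖ A + A ⊗ₖ B) := by
  simp only [sub_eq_add_neg, ← neg_smul, add_kronecker, kronecker_add, smul_kronecker,
    kronecker_smul]
  module

theorem two_smul_kronecker_self_add_kronecker_self (A B : Matrix l m R) :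
    (2 : R) • (A ⊗ₖ A + B ⊗ₖ B) = (A + B) ⊗ₖ (A + B) + (A - B) ⊗ₖ (A - B) := by
  simp only [sub_eq_add_neg, ← neg_one_smul R B, add_kronecker, kronecker_add, smul_kronecker,
    kronecker_smul]
  module

theorem three_smul_sum_kronecker_self (A : Fin 3 → Matrix l m R) :
    (3 : R) • ∑ k, A k ⊗ₖ A k =
      ∑ k, (A (k + 1) - A (k + 2)) ⊗ₖ (A (k + 1) - A (k + 2)) +
        (∑ k, A k) ⊗ₖ (∑ k, A k) := by
  simp only [Fin.sum_univ_three, Fin.isValue, Fin.reduceAdd, sub_eq_add_neg,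
    ← neg_one_smul R (A _), add_kronecker, kronecker_add, smul_kronecker, kronecker_smul]
  module

end Kronecker

theorem sum_sum_fin_three {M : Type*} [AddCommMonoid M] (f : Fin 3 → Fin 3 → M) :
    ∑ a, ∑ b, f a b = ∑ k, f k k + ∑ k, (f (k + 1) (k + 2) + f (k + 2) (k + 1)) := by
  simp only [Fin.sum_univ_three, Fin.isValue, Fin.reduceAdd]
  abel

theorem sum_perm_fin_three {M : Type*} [AddCommMonoid M] (f : Fin 3 → Fin 3 → Fin 3 → M) :
    ∑ σ : Equiv.Perm (Fin 3), f (σ 0) (σ 1) (σ 2) =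
      ∑ k, (f k (k + 1) (k + 2) + f k (k + 2) (k + 1)) := by
  have huniv : (Finset.univ : Finset (Equiv.Perm (Fin 3))) =
      {1, Equiv.swap 1 2, Equiv.swap 0 1, Equiv.swap 0 1 * Equiv.swap 1 2,
        Equiv.swap 0 2, Equiv.swap 1 2 * Equiv.swap 0 1} := by decide
  rw [huniv, Fin.sum_univ_three]
  repeat rw [Finset.sum_insert (by decide)]
  rw [Finset.sum_singleton]
  simp only [Equiv.Perm.mul_apply, Equiv.Perm.one_apply, Equiv.swap_apply_def,
    Fin.isValue, Fin.reduceEq, Fin.reduceAdd, if_true, if_false, zero_add]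
  abel

theorem exists_mul_eq_of_abs_le {K : Type*} [Field K] [LinearOrder K] [IsStrictOrderedRing K]
    {q m : K} (h : |q| ≤ m) : ∃ t, |t| ≤ 1 ∧ t * m = q := by
  refine ⟨q / m, ?_, div_mul_cancel_of_imp fun hm => ?_⟩
  · rw [abs_div, abs_of_nonneg ((abs_nonneg q).trans h)]
    exact div_le_one_of_le₀ h ((abs_nonneg q).trans h)
  · rwa [hm, abs_nonpos_iff] at h

-- This writes the positive semidefinite form `[[a, q], [q, d]]` as the mixture of the
-- rank-one forms of `(c, s)` and `(c, -s)` with weights `(1 ± t) / 2`.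
theorem exists_sq_eq_and_sq_eq_and_mul_eq {a d q : ℝ} (ha : 0 ≤ a) (hd : 0 ≤ d)
    (hq : q ^ 2 ≤ a * d) : ∃ c s t : ℝ, c ^ 2 = a ∧ s ^ 2 = d ∧ |t| ≤ 1 ∧ t * (c * s) = q := by
  have hcs : |q| ≤ √a * √d := by
    rw [← Real.sqrt_mul ha]
    exact Real.abs_le_sqrt hq
  obtain ⟨t, ht, htq⟩ := exists_mul_eq_of_abs_le hcs
  exact ⟨√a, √d, t, Real.sq_sqrt ha, Real.sq_sqrt hd, ht, htq⟩

theorem one_div_sqrt_two_sq : ((1 : ℂ) / Real.sqrt 2) ^ 2 = 1 / 2 := by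
  rw [div_pow, one_pow, ← Complex.ofReal_pow, Real.sq_sqrt zero_le_two, Complex.ofReal_ofNat]

theorem isHermitian_spin (k : Fin 3) : (spin k).IsHermitian := by
  ext i j
  fin_cases k <;> fin_cases i <;> fin_cases j <;> simp [spin, spinX, spinY, spinZ]

theorem spin_commutator (k : Fin 3) :
    spin (k + 1) * spin (k + 2) - spin (k + 2) * spin (k + 1) = Complex.I • spin k := by
  have hr := one_div_sqrt_two_sq
  have hI := Complex.I_sq
  ext i j
  fin_cases k <;> fin_cases i <;> fin_cases j <;>
    simp only [spin, spinX, spinY, spinZ, Fin.zero_eta, Fin.mk_one, Fin.reduceFinMk, Fin.isValue,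
      Fin.reduceAdd, zero_add, cons_val, cons_val', Matrix.sub_apply, Matrix.smul_apply,
      Matrix.mul_apply, Matrix.of_apply, Fin.sum_univ_three, smul_eq_mul] <;> grind

theorem sum_spin_mul_self : ∑ k, spin k * spin k = (2 : ℂ) • 1 := by
  have hr := one_div_sqrt_two_sq
  have hI := Complex.I_sq
  ext i j
  fin_cases i <;> fin_cases j <;>
    simp only [spin, spinX, spinY, spinZ, Fin.zero_eta, Fin.mk_one, Fin.reduceFinMk, Fin.isValue,
      cons_val, cons_val', Matrix.add_apply, Matrix.smul_apply, Matrix.mul_apply, Matrix.of_apply,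
      Matrix.one_apply, Fin.sum_univ_three, smul_eq_mul] <;> grind

/-- The quadrupole operator `{S^(k+1), S^(k+2)}` (anticommutator), with axes counted modulo 3. -/
noncomputable def spinQuadrupole (k : Fin 3) : Matrix (Fin 3) (Fin 3) ℂ :=
  spin (k + 1) * spin (k + 2) + spin (k + 2) * spin (k + 1)

/-- The biaxial quadrupole operator `(S^(k+1))² - (S^(k+2))²`, with axes counted modulo 3. -/
noncomputable def spinBiaxial (k : Fin 3) : Matrix (Fin 3) (Fin 3) ℂ :=
  spin (k + 1) * spin (k + 1) - spin (k + 2) * spin (k + 2)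

/-- The Bloch vector `(a, b, c)` of the two-level system attached to the axis `k`, which is the
orthogonal complement of the kernel of `S^k`: the three matrices act on it as Pauli matrices. -/
noncomputable def blochSpin (k : Fin 3) (a b c : ℝ) : Matrix (Fin 3) (Fin 3) ℂ :=
  (a : ℂ) • spin k + (b : ℂ) • spinQuadrupole k + (c : ℂ) • spinBiaxial k

theorem isHermitian_blochSpin (k : Fin 3) (a b c : ℝ) : (blochSpin k a b c).IsHermitian := by
  simp [Matrix.IsHermitian, blochSpin, spinQuadrupole, spinBiaxial, (isHermitian_spin _).eq,
    add_comm]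

open Polynomial in
theorem charpoly_blochSpin (k : Fin 3) (a b c : ℝ) :
    (blochSpin k a b c).charpoly = X ^ 3 - C ((a ^ 2 + b ^ 2 + c ^ 2 : ℝ) : ℂ) * X := by
  have hr := one_div_sqrt_two_sq
  have hI := Complex.I_sq
  refine Polynomial.funext fun t => ?_
  rw [eval_charpoly, det_fin_three]
  push_cast
  fin_cases k <;>
    simp only [blochSpin, spinQuadrupole, spinBiaxial, spin, spinX, spinY, spinZ, scalar_apply,
      diagonal_apply, Fin.zero_eta, Fin.mk_one, Fin.reduceFinMk, Fin.isValue, Fin.reduceAdd,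
      zero_add, cons_val, cons_val', Matrix.sub_apply, Matrix.add_apply, Matrix.smul_apply,
      Matrix.mul_apply, Matrix.of_apply, Fin.sum_univ_three, smul_eq_mul, eval_sub, eval_mul,
      eval_pow, eval_X, eval_C] <;> grind

theorem exists_unitary_conj_spinZ_eq_blochSpin (k : Fin 3) {a b c : ℝ}
    (h : a ^ 2 + b ^ 2 + c ^ 2 = 1) :
    ∃ u ∈ unitaryGroup (Fin 3) ℂ, uᴴ * spinZ * u = blochSpin k a b c := by
  have hZ : spinZ = blochSpin 2 1 0 0 := by simp [blochSpin, spin]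
  rw [hZ]
  refine exists_unitary_conj_eq_of_charpoly_eq (isHermitian_blochSpin ..)
    (isHermitian_blochSpin ..) ?_
  rw [charpoly_blochSpin, charpoly_blochSpin, h]
  norm_num

theorem spin_mul_spin_kronecker_self_add (k : Fin 3) :
    (spin (k + 1) * spin (k + 2)) ⊗ₖ (spin (k + 1) * spin (k + 2)) +
        (spin (k + 2) * spin (k + 1)) ⊗ₖ (spin (k + 2) * spin (k + 1)) =
      (1 / 2 : ℂ) • (spinQuadrupole k ⊗ₖ spinQuadrupole k - spin k ⊗ₖ spin k) := by
  have h := two_smul_kronecker_self_add_kronecker_self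
    (spin (k + 1) * spin (k + 2)) (spin (k + 2) * spin (k + 1))
  rw [spin_commutator, smul_kronecker, kronecker_smul, smul_smul, Complex.I_mul_I,
    ← spinQuadrupole] at h
  linear_combination (norm := module) (1 / 2 : ℂ) • h

theorem sum_spin_sq_kronecker_self :
    ∑ k, (spin k * spin k) ⊗ₖ (spin k * spin k) =
      (1 / 3 : ℂ) • ∑ k, spinBiaxial k ⊗ₖ spinBiaxial k + (4 / 3 : ℂ) • 1 := by
  have h : (3 : ℂ) • ∑ k, (spin k * spin k) ⊗ₖ (spin k * spin k) =
      ∑ k, spinBiaxial k ⊗ₖ spinBiaxial k +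
        (∑ k, spin k * spin k) ⊗ₖ (∑ k, spin k * spin k) :=
    three_smul_sum_kronecker_self fun k => spin k * spin k
  rw [sum_spin_mul_self, smul_kronecker, kronecker_smul, one_kronecker_one, smul_smul] at h
  linear_combination (norm := module) (1 / 3 : ℂ) • h

theorem hTwo_eq_sum :
    hTwo = ∑ k, ((1 / 2 : ℂ) • (spinQuadrupole k ⊗ₖ spinQuadrupole k - spin k ⊗ₖ spin k) +
      (1 / 3 : ℂ) • (spinBiaxial k ⊗ₖ spinBiaxial k)) + (4 / 3 : ℂ) • 1 :=
  calc hTwo = ∑ a, ∑ b, (spin a * spin b) ⊗ₖ (spin a * spin b) := by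
        simp only [hTwo, hOne, Finset.sum_mul_sum, mul_kronecker_mul]
    _ = _ := by
        rw [sum_sum_fin_three, sum_spin_sq_kronecker_self]
        simp only [spin_mul_spin_kronecker_self_add, Finset.sum_add_distrib, Finset.smul_sum]
        abel

theorem hThree_eq_sum :
    hThree = ∑ k, (spinQuadrupole k ⊗ₖ spin k + spin k ⊗ₖ spinQuadrupole k) := by
  rw [hThree, Finset.sum_add_distrib,
    sum_perm_fin_three fun a b c => (spin a * spin b) ⊗ₖ spin c,
    sum_perm_fin_three fun a b c => spin a ⊗ₖ (spin b * spin c)]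
  simp only [spinQuadrupole, add_kronecker, kronecker_add, Fin.sum_univ_three, Fin.isValue,
    Fin.reduceAdd]
  abel

theorem hOne_add_smul_hTwo_add_smul_hThree (p q : ℂ) :
    hOne + p • hTwo + q • hThree =
      ∑ k, ((1 - p / 2) • (spin k ⊗ₖ spin k) +
        (p / 2) • (spinQuadrupole k ⊗ₖ spinQuadrupole k) +
        q • (spinQuadrupole k ⊗ₖ spin k + spin k ⊗ₖ spinQuadrupole k) +
        (p / 3) • (spinBiaxial k ⊗ₖ spinBiaxial k)) + (4 / 3 * p) • 1 := by
  rw [hOne, hTwo_eq_sum, hThree_eq_sum]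
  simp only [Fin.sum_univ_three]
  module

theorem smul_blochSpin_kronecker_self_add_smul_blochSpin_kronecker_self (k : Fin 3) (c s t : ℝ) :
    (((1 + t) / 2 : ℝ) : ℂ) • (blochSpin k c s 0 ⊗ₖ blochSpin k c s 0) +
        (((1 - t) / 2 : ℝ) : ℂ) • (blochSpin k c (-s) 0 ⊗ₖ blochSpin k c (-s) 0) =
      ((c ^ 2 : ℝ) : ℂ) • (spin k ⊗ₖ spin k) +
        ((s ^ 2 : ℝ) : ℂ) • (spinQuadrupole k ⊗ₖ spinQuadrupole k) +
        ((t * (c * s) : ℝ) : ℂ) • (spinQuadrupole k ⊗ₖ spin k + spin k ⊗ₖ spinQuadrupole k) := by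
  have hplus : blochSpin k c s 0 = (c : ℂ) • spin k + (s : ℂ) • spinQuadrupole k := by
    simp [blochSpin]
  have hminus : blochSpin k c (-s) 0 = (c : ℂ) • spin k - (s : ℂ) • spinQuadrupole k := by
    simp [blochSpin, sub_eq_add_neg]
  rw [hplus, hminus, smul_kronecker_add_add_smul_kronecker_sub]
  push_cast
  module

/-- The three conjugates of `S^z` attached to the axis `k` in the pulse sequence: the Bloch vectors
`(c, s, 0)`, `(c, -s, 0)` and `(0, 0, 1)`. -/
noncomputable def sptOperator (c s : ℝ) (k : Fin 3) : Fin 3 → Matrix (Fin 3) (Fin 3) ℂ :=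
  ![blochSpin k c s 0, blochSpin k c (-s) 0, blochSpin k 0 0 1]

/-- The weights of the three conjugates `sptOperator` of an axis. They are not normalized: their sum
`1 + p / 3` over each axis gives `3 + p` in total. -/
noncomputable def sptWeight (p t : ℝ) : Fin 3 → ℝ := ![(1 + t) / 2, (1 - t) / 2, p / 3]

theorem sptWeight_nonneg {p t : ℝ} (hp : 0 ≤ p) (ht : |t| ≤ 1) (j : Fin 3) :
    0 ≤ sptWeight p t j := by
  obtain ⟨hneg, hpos⟩ := abs_le.mp ht
  have hplus : 0 ≤ (1 + t) / 2 := by linarith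
  have hminus : 0 ≤ (1 - t) / 2 := by linarith
  have hbiaxial : 0 ≤ p / 3 := by linarith
  fin_cases j <;> assumption

theorem sum_sptWeight (p t : ℝ) : ∑ j, sptWeight p t j = 1 + p / 3 := by
  simp only [sptWeight, Fin.sum_univ_three, cons_val]
  ring

theorem exists_unitary_conj_spinZ_eq_sptOperator {c s : ℝ} (h : c ^ 2 + s ^ 2 = 1)
    (k j : Fin 3) :
    ∃ u ∈ unitaryGroup (Fin 3) ℂ, uᴴ * spinZ * u = sptOperator c s k j := by
  fin_cases j <;> exact exists_unitary_conj_spinZ_eq_blochSpin k (by simp [h])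

theorem sum_sptWeight_smul_sptOperator {p q c s t : ℝ} (hc : c ^ 2 = 1 - p / 2)
    (hs : s ^ 2 = p / 2) (ht : t * (c * s) = q) :
    ∑ k, ∑ j, (sptWeight p t j : ℂ) • (sptOperator c s k j ⊗ₖ sptOperator c s k j) =
      hOne + (p : ℂ) • hTwo + (q : ℂ) • hThree - ((4 / 3 * p : ℝ) : ℂ) • 1 := by
  have hbiaxial (k : Fin 3) : blochSpin k 0 0 1 = spinBiaxial k := by simp [blochSpin]
  rw [hOne_add_smul_hTwo_add_smul_hThree, eq_sub_iff_add_eq]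
  congr 1
  · refine Finset.sum_congr rfl fun k _ => ?_
    simp only [sptWeight, sptOperator, Fin.sum_univ_three, cons_val,
      smul_blochSpin_kronecker_self_add_smul_blochSpin_kronecker_self, hc, hs, ht, hbiaxial]
    push_cast
    rfl
  · push_cast
    rfl

theorem engineer_SPT_from_Ising_general (p q : ℝ) (h : 4 * q ^ 2 ≤ p * (2 - p)) :
    ∃ (k : ℕ) (u : Fin k → Matrix (Fin 3) (Fin 3) ℂ) (α : Fin k → ℝ) (β c : ℝ),
      (∀ i, u i ∈ Matrix.unitaryGroup (Fin 3) ℂ) ∧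
      (∀ i, 0 ≤ α i) ∧ (∑ i, α i = 1) ∧ 0 < β ∧
      ∑ i, (α i : ℂ) • ((u i ⊗ₖ u i)ᴴ * (spinZ ⊗ₖ spinZ) * (u i ⊗ₖ u i)) =
        (β : ℂ) • (hOne + (p : ℂ) • hTwo + (q : ℂ) • hThree) - (c : ℂ) • 1 := by
  have hp0 : 0 ≤ p := by nlinarith [sq_nonneg q]
  have hp2 : p ≤ 2 := by nlinarith [sq_nonneg q]
  have hβ : 0 < (3 + p)⁻¹ := by positivity
  obtain ⟨c, s, t, hc, hs, ht, htq⟩ : ∃ c s t : ℝ,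
      c ^ 2 = 1 - p / 2 ∧ s ^ 2 = p / 2 ∧ |t| ≤ 1 ∧ t * (c * s) = q :=
    exists_sq_eq_and_sq_eq_and_mul_eq (by linarith) (by linarith) (by linarith)
  have hcs : c ^ 2 + s ^ 2 = 1 := by rw [hc, hs]; ring
  have hsum : ∑ x : Fin 3 × Fin 3, (3 + p)⁻¹ * sptWeight p t x.2 = 1 := by
    simp only [← Finset.mul_sum, Fintype.sum_prod_type, sum_sptWeight, Finset.sum_const,
      Finset.card_univ, Fintype.card_fin, nsmul_eq_mul]
    field_simp
    norm_num
  obtain ⟨k, u, α, hu, hα, hα1, hpulse⟩ := exists_pulses_of_unitary_conj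
    (fun x : Fin 3 × Fin 3 => exists_unitary_conj_spinZ_eq_sptOperator hcs x.1 x.2)
    (fun x => mul_nonneg hβ.le (sptWeight_nonneg hp0 ht x.2)) hsum
  refine ⟨k, u, α, (3 + p)⁻¹, (3 + p)⁻¹ * (4 / 3 * p), hu, hα, hα1, hβ, ?_⟩
  simp only [hpulse, Complex.ofReal_mul (3 + p)⁻¹, mul_smul, ← Finset.smul_sum,
    Fintype.sum_prod_type, sum_sptWeight_smul_sptOperator hc hs htq, smul_sub]

/-- For all `p, q` with `2|q| ≤ p ≤ 2 - 2|q|`, the SPT Hamiltonian `h₁ + p h₂ + q h₃` can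
be engineered (up to a positive rescaling `β` and an identity shift `c I`) from nearest
neighbor Ising interactions `S^z ⊗ S^z` using a global pulse sequence. -/
theorem engineer_SPT_from_Ising (p q : ℝ)
    (hpq1 : 2 * |q| ≤ p) (hpq2 : p ≤ 2 - 2 * |q|) :
    ∃ (k : ℕ) (u : Fin k → Matrix (Fin 3) (Fin 3) ℂ) (α : Fin k → ℝ) (β c : ℝ),
      (∀ i, u i ∈ Matrix.unitaryGroup (Fin 3) ℂ) ∧
      (∀ i, 0 ≤ α i) ∧ (∑ i, α i = 1) ∧ 0 < β ∧
      ∑ i, (α i : ℂ) • ((u i ⊗ₖ u i)ᴴ * (spinZ ⊗ₖ spinZ) * (u i ⊗ₖ u i)) =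
        (β : ℂ) • (hOne + (p : ℂ) • hTwo + (q : ℂ) • hThree) - (c : ℂ) • 1 := by
  exact engineer_SPT_from_Ising_general p q (by nlinarith [sq_abs q, abs_nonneg q])
end
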